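/- Let α ∈ (0,1], let u be a classical solution of the localized fractional heat equation, let x₀ ∈ B_1^0, and let C₀ ≥ 0. Assume |u(t,x,y) − u(−1,x₀,0)| ≤ C₀ (|x−x₀|² + y^{1−a} + (t+1))^α for all (t,x,y) ∈ ({−1} × closure(B_1^+)) ∪ ([−1,0] × closure((∂B_1)^+)). Then there is a constant C, depending only on α, n and a, such that |u(t,x,y) − u(−1,x₀,0)| ≤ C C₀ (|x−x₀|² + y^{1−a} + (t+1))^{sα/2} for all (t,x,y) ∈ [−1,0] × closure(B_1^+). -/

import Mathlib

open Set Filter Topology MeasureTheory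
open scoped RealInnerProductSpace

noncomputable section

abbrev En (n : ℕ) := EuclideanSpace ℝ (Fin n)

/-- The open upper half ball `B_r^+`. -/
def halfBall (n : ℕ) (r : ℝ) : Set (En n × ℝ) :=
  {p | ‖p.1‖ ^ 2 + p.2 ^ 2 < r ^ 2 ∧ 0 < p.2}

/-- The closure of the upper half ball. -/
def closedHalfBall (n : ℕ) (r : ℝ) : Set (En n × ℝ) :=
  {p | ‖p.1‖ ^ 2 + p.2 ^ 2 ≤ r ^ 2 ∧ 0 ≤ p.2}

/-- `B_r^+ ∪ B_r^0`. -/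
def halfBallWithBase (n : ℕ) (r : ℝ) : Set (En n × ℝ) :=
  {p | ‖p.1‖ ^ 2 + p.2 ^ 2 < r ^ 2 ∧ 0 ≤ p.2}

/-- The flat ball `B_r^0` in `ℝⁿ`. -/
def flatBall (n : ℕ) (r : ℝ) : Set (En n) := {x | ‖x‖ < r}

/-- `(∂B_1)^+`. -/
def spherePlus (n : ℕ) : Set (En n × ℝ) := {p | ‖p.1‖ ^ 2 + p.2 ^ 2 = 1 ∧ 0 < p.2}

/-- closure of `(∂B_1)^+`. -/
def closedSpherePlus (n : ℕ) : Set (En n × ℝ) := {p | ‖p.1‖ ^ 2 + p.2 ^ 2 = 1 ∧ 0 ≤ p.2}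

/-- Second directional derivative of `u` at `p` in direction `v`. -/
def D2 {n : ℕ} (u : En n × ℝ → ℝ) (p v : En n × ℝ) : ℝ :=
  fderiv ℝ (fun q => fderiv ℝ u q v) p v

/-- The Laplacian in the `n+1` variables `(x, y)`. -/
def lap {n : ℕ} (u : En n × ℝ → ℝ) (p : En n × ℝ) : ℝ :=
  (∑ i : Fin n, D2 u p (EuclideanSpace.single i 1, 0)) + D2 u p (0, 1)

/-- `u` is `a`-harmonic on `Ω`: it is `C²` there and `Δu + (a/y) ∂_y u = 0`. -/
def IsAHarmonicOn {n : ℕ} (a : ℝ) (u : En n × ℝ → ℝ) (Ω : Set (En n × ℝ)) : Prop :=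
  ContDiffOn ℝ 2 u Ω ∧ ∀ p ∈ Ω, lap u p + (a / p.2) * fderiv ℝ u p (0, 1) = 0

/-- `lim_{y → 0⁺} y^a ∂_y w(x, y) = L`. -/
def NormalDerivLimit {n : ℕ} (a : ℝ) (w : En n × ℝ → ℝ) (x : En n) (L : ℝ) : Prop :=
  Tendsto (fun y : ℝ => y ^ a * fderiv ℝ w (x, y) (0, 1)) (𝓝[>] (0 : ℝ)) (𝓝 L)

/-- The boundary-restriction `(t, x) ↦ u(t, x, 0)`. -/
def bdryFun {n : ℕ} (u : ℝ → En n × ℝ → ℝ) : ℝ × En n → ℝ := fun q => u q.1 (q.2, 0)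

/-- A classical solution of the extended drift–diffusion equation on
`[-1,0] × closure (B_1^+)` with drift `b` and right-hand side `f`. -/
def IsExtDDSolution {n : ℕ} (a : ℝ) (b : ℝ → En n → En n) (f : ℝ → En n → ℝ)
    (u : ℝ → En n × ℝ → ℝ) : Prop :=
  ContinuousOn (fun q : ℝ × (En n × ℝ) => u q.1 q.2) (Icc (-1 : ℝ) 0 ×ˢ closedHalfBall n 1) ∧
  (∀ t ∈ Icc (-1 : ℝ) 0, IsAHarmonicOn a (u t) (halfBall n 1)) ∧
  (∀ q ∈ Ioc (-1 : ℝ) 0 ×ˢ flatBall n 1,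
      DifferentiableWithinAt ℝ (bdryFun u) (Ioc (-1 : ℝ) 0 ×ˢ flatBall n 1) q) ∧
  (∀ t x, (t, x) ∈ Ioc (-1 : ℝ) 0 ×ˢ flatBall n 1 →
      ∃ L : ℝ, NormalDerivLimit a (u t) x L ∧
        fderivWithin ℝ (bdryFun u) (Ioc (-1 : ℝ) 0 ×ˢ flatBall n 1) (t, x) (1, 0) +
          fderivWithin ℝ (bdryFun u) (Ioc (-1 : ℝ) 0 ×ˢ flatBall n 1) (t, x) (0, b t x) -
          L = f t x)

/-- A classical solution of the localized fractional heat equation on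
`[-1,0] × closure (B_1^+)`. -/
def IsFracHeatSolution {n : ℕ} (a : ℝ) (u : ℝ → En n × ℝ → ℝ) : Prop :=
  ContinuousOn (fun q : ℝ × (En n × ℝ) => u q.1 q.2) (Icc (-1 : ℝ) 0 ×ˢ closedHalfBall n 1) ∧
  (∀ t ∈ Icc (-1 : ℝ) 0, IsAHarmonicOn a (u t) (halfBall n 1)) ∧
  (∀ t ∈ Ioc (-1 : ℝ) 0, ∀ x ∈ flatBall n 1,
      DifferentiableWithinAt ℝ (fun τ => u τ (x, 0)) (Ioc (-1 : ℝ) 0) t ∧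
      NormalDerivLimit a (u t) x (derivWithin (fun τ => u τ (x, 0)) (Ioc (-1 : ℝ) 0) t))


def psi {n : ℕ} (s : ℝ) (x₀ : En n) (t : ℝ) (p : En n × ℝ) : ℝ :=
  ‖p.1 - x₀‖ ^ 2 + (n + 1) * p.2 ^ (2*s) - n * p.2 ^ 2 + (n + 2) * (t + 1)

lemma second_deriv_test {h h' : ℝ → ℝ} {c : ℝ} (hd : ∀ᶠ r in 𝓝 (0:ℝ), HasDerivAt h (h' r) r)
    (hdd : HasDerivAt h' c 0) (hmax : IsLocalMax h 0) : h' 0 = 0 ∧ c ≤ 0 := by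
  have h0 : h' 0 = 0 := hmax.hasDerivAt_eq_zero hd.self_of_nhds
  refine ⟨h0, ?_⟩
  by_contra hc
  push Not at hc
  have e1 : deriv h =ᶠ[𝓝 0] h' := by
    filter_upwards [hd] with r hr using hr.deriv
  have e2 : deriv (deriv h) 0 = c := by rw [e1.deriv_eq]; exact hdd.deriv
  have hmin : IsLocalMin h 0 := isLocalMin_of_deriv_deriv_pos (by rw [e2]; exact hc)
    (by rw [e1.self_of_nhds, h0]) hd.self_of_nhds.continuousAt
  have e3 : h =ᶠ[𝓝 0] fun _ => h 0 := by
    filter_upwards [hmax, hmin] with r h1 h2 using le_antisymm h1 h2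
  have e4 : deriv h =ᶠ[𝓝 0] fun _ => 0 := by
    have := e3.deriv
    filter_upwards [this] with r hr
    rw [hr]; simp
  have : deriv (deriv h) 0 = 0 := by rw [e4.deriv_eq]; simp
  linarith

lemma isOpen_halfBall (n : ℕ) (r : ℝ) : IsOpen (halfBall n r) := by
  have h1 : IsOpen {p : En n × ℝ | ‖p.1‖ ^ 2 + p.2 ^ 2 < r ^ 2} :=
    isOpen_lt (by fun_prop) (by fun_prop)
  have h2 : IsOpen {p : En n × ℝ | 0 < p.2} := isOpen_lt (by fun_prop) (by fun_prop)
  exact h1.inter h2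

lemma line_derivs {n : ℕ} {u : En n × ℝ → ℝ} {p : En n × ℝ} (v : En n × ℝ)
    (hu : ContDiffOn ℝ 2 u (halfBall n 1)) (hp : p ∈ halfBall n 1) :
    (∀ᶠ r in 𝓝 (0:ℝ), HasDerivAt (fun r : ℝ => u (p + r • v)) (fderiv ℝ u (p + r • v) v) r) ∧
    HasDerivAt (fun r : ℝ => fderiv ℝ u (p + r • v) v) (D2 u p v) 0 := by
  have hline : ∀ r : ℝ, HasDerivAt (fun r : ℝ => p + r • v) v r := by
    intro r
    simpa using ((hasDerivAt_id r).smul_const v).const_add p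
  have hcont : Tendsto (fun r : ℝ => p + r • v) (𝓝 0) (𝓝 p) := by
    have := (hline 0).continuousAt.tendsto
    simpa using this
  constructor
  · filter_upwards [hcont.eventually ((isOpen_halfBall n 1).mem_nhds hp)] with r hr
    have hd : DifferentiableAt ℝ u (p + r • v) :=
      (hu.contDiffAt ((isOpen_halfBall n 1).mem_nhds hr)).differentiableAt (by norm_num)
    exact hd.hasFDerivAt.comp_hasDerivAt r (hline r)
  · have hc : ContDiffAt ℝ 2 u p := hu.contDiffAt ((isOpen_halfBall n 1).mem_nhds hp)
    have h1 : DifferentiableAt ℝ (fderiv ℝ u) p :=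
      (hc.fderiv_right (m := 1) (by norm_num)).differentiableAt (by norm_num)
    have h2 : DifferentiableAt ℝ (fun q => fderiv ℝ u q v) p :=
      h1.clm_apply (differentiableAt_const v)
    have h3 : HasFDerivAt (fun q => fderiv ℝ u q v) (fderiv ℝ (fun q => fderiv ℝ u q v) p)
        (p + (0:ℝ) • v) := by simpa using h2.hasFDerivAt
    exact h3.comp_hasDerivAt 0 (hline 0)

lemma closedHalfBall_compact (n : ℕ) : IsCompact (closedHalfBall n 1) := by
  refine Metric.isCompact_of_isClosed_isBounded ?_ ?_
  · have h1 : IsClosed {p : En n × ℝ | ‖p.1‖ ^ 2 + p.2 ^ 2 ≤ 1 ^ 2} :=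
      isClosed_le (by fun_prop) (by fun_prop)
    have h2 : IsClosed {p : En n × ℝ | 0 ≤ p.2} := isClosed_le (by fun_prop) (by fun_prop)
    exact h1.inter h2
  · refine (Metric.isBounded_closedBall (x := (0 : En n × ℝ)) (r := 1)).subset ?_
    rintro ⟨x, y⟩ ⟨h1, h2⟩
    simp only at h1 h2
    rw [mem_closedBall_zero_iff, Prod.norm_def]
    simp only [sup_le_iff, Real.norm_eq_abs]
    constructor
    · nlinarith [norm_nonneg x, sq_nonneg y]
    · rw [abs_of_nonneg h2]; nlinarith [norm_nonneg x, sq_nonneg ‖x‖]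

lemma psi_cont {n : ℕ} {s : ℝ} (hs : s ∈ Ioo (0:ℝ) (1/2)) (x₀ : En n) :
    Continuous (fun q : ℝ × (En n × ℝ) => psi s x₀ q.1 q.2) := by
  unfold psi
  have : Continuous (fun q : ℝ × (En n × ℝ) => q.2.2 ^ (2*s)) :=
    (Real.continuous_rpow_const (by linarith [hs.1])).comp (by fun_prop)
  fun_prop

/-- the interior case -/
lemma no_interior_max {n : ℕ} (hn : 1 ≤ n) {s : ℝ} (hs : s ∈ Ioo (0:ℝ) (1/2))
    {u : En n × ℝ → ℝ} {x₀ : En n} {σ M t : ℝ} (hM : 0 < M)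
    (hu : IsAHarmonicOn (1 - 2*s) u (halfBall n 1)) {p : En n × ℝ} (hp : p ∈ halfBall n 1)
    (hmax : IsLocalMax (fun q => σ * u q - M * psi s x₀ t q) p) : False := by
  obtain ⟨hC, heq⟩ := hu
  have heq := heq p hp
  have hlm : ∀ v : En n × ℝ,
      IsLocalMax (fun r : ℝ => σ * u (p + r • v) - M * psi s x₀ t (p + r • v)) 0 := by
    intro v
    have hcont : Tendsto (fun r : ℝ => p + r • v) (𝓝 0) (𝓝 p) := by
      have : Continuous (fun r : ℝ => p + r • v) := by fun_prop
      simpa using this.tendsto 0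
    have := hcont.eventually hmax
    filter_upwards [this] with r hr
    simpa using hr
  have hx : ∀ i : Fin n, σ * D2 u p (EuclideanSpace.single i 1, 0) ≤ 2 * M := by
    intro i
    set e : En n := EuclideanSpace.single i 1 with he
    have hen : ‖e‖ = 1 := by simp [he]
    obtain ⟨h1, h2⟩ := line_derivs (e, (0:ℝ)) hC hp
    have hps : ∀ r : ℝ, HasDerivAt (fun r : ℝ => psi s x₀ t (p + r • (e, (0:ℝ))))
        (2 * ⟪p.1 - x₀, e⟫ + 2 * r) r := by
      intro r
      have : (fun r : ℝ => psi s x₀ t (p + r • (e, (0:ℝ)))) =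
          fun r : ℝ => 2 * ⟪p.1 - x₀, e⟫ * r + r ^ 2 + psi s x₀ t p := by
        ext r
        have : p.1 + r • e - x₀ = (p.1 - x₀) + r • e := by abel
        simp only [psi, Prod.fst_add, Prod.snd_add, Prod.smul_fst, Prod.smul_snd, smul_zero,
          add_zero, this]
        rw [norm_add_sq_real, norm_smul, hen, real_inner_smul_right]
        simp
        ring
      rw [this]
      have := (((hasDerivAt_id r).const_mul (2 * ⟪p.1 - x₀, e⟫)).add
        (hasDerivAt_pow 2 r)).add_const (psi s x₀ t p)
      exact this.congr_deriv (by simp)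
    have := second_deriv_test
      (h' := fun r : ℝ => σ * fderiv ℝ u (p + r • (e, (0:ℝ))) (e, 0) -
        M * (2 * ⟪p.1 - x₀, e⟫ + 2 * r))
      (c := σ * D2 u p (e, 0) - M * 2) ?_ ?_ (hlm (e, 0))
    · linarith [this.2]
    · filter_upwards [h1] with r hr
      exact (hr.const_mul σ).sub ((hps r).const_mul M)
    · refine (h2.const_mul σ).sub (HasDerivAt.const_mul M ?_)
      have := ((hasDerivAt_id (0:ℝ)).const_mul 2).const_add (2 * ⟪p.1 - x₀, e⟫)
      simpa using this
  have hy0 : 0 < p.2 := hp.2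
  obtain ⟨h1, h2⟩ := line_derivs ((0 : En n), (1:ℝ)) hC hp
  have hlin : ∀ r : ℝ, HasDerivAt (fun r : ℝ => p.2 + r) 1 r := fun r =>
    (hasDerivAt_id r).const_add p.2
  have hps : ∀ r : ℝ, 0 < p.2 + r → HasDerivAt (fun r : ℝ => psi s x₀ t (p + r • ((0 : En n), (1:ℝ))))
        ((n+1) * (2*s * (p.2 + r)^(2*s-1)) - n * (2 * (p.2+r))) r := by
    intro r hr
    have : (fun r : ℝ => psi s x₀ t (p + r • ((0 : En n), (1:ℝ)))) =
          fun r : ℝ => ‖p.1 - x₀‖ ^ 2 + (n + 1) * (p.2 + r) ^ (2*s) - n * (p.2 + r) ^ 2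
            + (n + 2) * (t + 1) := by
      ext r
      simp [psi]
    rw [this]
    have ha := (hlin r).rpow_const (p := 2*s) (Or.inl hr.ne')
    have hb := (hlin r).pow 2
    have := (((ha.const_mul ((n:ℝ)+1)).const_add (‖p.1 - x₀‖ ^ 2)).sub
      (hb.const_mul (n:ℝ))).add_const (((n:ℝ) + 2) * (t + 1))
    exact this.congr_deriv (by simp)
  have hfin := second_deriv_test
      (h' := fun r : ℝ => σ * fderiv ℝ u (p + r • ((0 : En n), (1:ℝ))) (0, 1) -
        M * ((n+1) * (2*s * (p.2 + r)^(2*s-1)) - n * (2 * (p.2+r))))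
      (c := σ * D2 u p (0, 1) - M * ((n+1) * (2*s * ((2*s-1) * p.2^(2*s-1-1))) - n * 2))
      ?_ ?_ (hlm (0, 1))
  · obtain ⟨g1, g2⟩ := hfin
    simp only [zero_smul, add_zero] at g1
    have hsum : σ * ∑ i : Fin n, D2 u p (EuclideanSpace.single i 1, 0) ≤ n * (2 * M) := by
      rw [Finset.mul_sum]
      calc _ ≤ ∑ i : Fin n, 2 * M := Finset.sum_le_sum fun i _ => hx i
        _ = n * (2 * M) := by simp
    unfold lap at heq
    have hpw : p.2 ^ (2*s-1) = p.2 ^ (2*s-1-1) * p.2 := by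
      rw [← Real.rpow_add_one hy0.ne']; ring_nf
    set P := p.2 ^ (2*s-1-1)
    set S := ∑ i : Fin n, D2 u p (EuclideanSpace.single i 1, 0)
    set G := fderiv ℝ u p (0, 1)
    have k1 : σ * G = M * ((n+1) * (2*s * (P * p.2)) - n * (2 * p.2)) := by
      rw [← hpw]; linarith
    have k2 : σ * ((1 - 2*s) / p.2 * G) = (1-2*s) * (M * ((n+1) * (2*s * P) - n * 2)) := by
      have : σ * ((1 - 2*s) / p.2 * G) = (1 - 2*s) / p.2 * (σ * G) := by ring
      rw [this, k1]; field_simp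
    have k3 : σ * S + σ * D2 u p (0,1) + σ * ((1 - 2*s) / p.2 * G) = 0 := by
      rw [← mul_add, ← mul_add, heq, mul_zero]
    rw [k2] at k3
    have : 0 < M * (n * (1 - 2*s)) := by
      have : (0:ℝ) < n := by exact_mod_cast hn
      have : 0 < 1 - 2*s := by linarith [hs.2]
      positivity
    nlinarith
  · have : ∀ᶠ r in 𝓝 (0:ℝ), 0 < p.2 + r := by
      have : Tendsto (fun r : ℝ => p.2 + r) (𝓝 0) (𝓝 p.2) := by
        simpa using (hlin 0).continuousAt.tendsto
      exact this.eventually (lt_mem_nhds hy0)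
    filter_upwards [h1, this] with r hr hr'
    exact (hr.const_mul σ).sub ((hps r hr').const_mul M)
  · refine (h2.const_mul σ).sub (HasDerivAt.const_mul M ?_)
    have ha := (hlin 0).rpow_const (p := 2*s-1) (Or.inl (by simpa using hy0.ne'))
    have := ((ha.const_mul (2*s)).const_mul ((n:ℝ)+1)).sub
      (((hlin 0).const_mul 2).const_mul (n:ℝ))
    exact this.congr_deriv (by simp)

/-- the bottom case -/
lemma no_bottom_max {n : ℕ} {s : ℝ} (hs : s ∈ Ioo (0:ℝ) (1/2))
    {u : ℝ → En n × ℝ → ℝ} {x₀ : En n} {σ M t : ℝ} (hM : 0 < M)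
    (hu : IsFracHeatSolution (1 - 2*s) u) {x : En n} (hx : x ∈ flatBall n 1)
    (ht : t ∈ Ioc (-1:ℝ) 0)
    (hmax : ∀ τ ∈ Icc (-1:ℝ) 0, ∀ q ∈ closedHalfBall n 1,
      σ * u τ q - M * psi s x₀ τ q ≤ σ * u t (x, 0) - M * psi s x₀ t (x, 0)) : False := by
  obtain ⟨hc, hh, hb⟩ := hu
  obtain ⟨hd, hL⟩ := hb t ht x hx
  have hx1 : ‖x‖ < 1 := hx
  have hx2 : 0 < 1 - ‖x‖^2 := by nlinarith [norm_nonneg x]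
  set L := derivWithin (fun τ => u τ (x, 0)) (Ioc (-1 : ℝ) 0) t with hLdef
  have hxm : ∀ y : ℝ, 0 ≤ y → y^2 < 1 - ‖x‖^2 → (x, y) ∈ closedHalfBall n 1 := by
    intro y h1 h2
    refine ⟨?_, h1⟩
    simp only; linarith
  -- time derivative
  have hT : M * (n + 2) ≤ σ * L := by
    have h1 : HasDerivWithinAt (fun τ => u τ (x, 0)) L (Iio t) t := by
      refine hd.hasDerivWithinAt.mono_of_mem_nhdsWithin ?_
      filter_upwards [Ioo_mem_nhdsLT ht.1] with r hr
      exact ⟨hr.1, hr.2.le.trans ht.2⟩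
    have h2 : HasDerivWithinAt (fun τ => psi s x₀ τ (x, 0)) (n + 2) (Iio t) t := by
      unfold psi
      have := ((((hasDerivAt_id t).add_const 1).const_mul ((n:ℝ)+2)).const_add
        (‖x - x₀‖ ^ 2 + (n + 1) * (0:ℝ) ^ (2*s) - n * 0 ^ 2)).hasDerivWithinAt (s := Iio t)
      simpa using this
    have h3 := (h1.const_mul σ).sub (h2.const_mul M)
    rw [hasDerivWithinAt_iff_tendsto_slope' (by simp)] at h3
    have : 0 ≤ σ * L - M * (n+2) := by
      refine ge_of_tendsto h3 ?_
      filter_upwards [Ioo_mem_nhdsLT ht.1] with r hr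
      have := hmax r ⟨hr.1.le, hr.2.le.trans ht.2⟩ (x, 0) (hxm 0 le_rfl (by simpa using hx2))
      rw [slope_def_field]
      refine div_nonneg_of_nonpos ?_ (by linarith [hr.2])
      simp only [Pi.sub_apply]
      linarith
    linarith
  have hN : σ * L ≤ M * ((n + 1) * (2*s)) := by
    by_contra hcon
    push Not at hcon
    have hlim : Tendsto (fun y : ℝ => σ * (y ^ (1 - 2*s) * fderiv ℝ (u t) (x, y) (0, 1)) -
        M * ((n+1) * (2*s) - n * (2 * y ^ (1 - 2*s) * y))) (𝓝[>] 0)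
        (𝓝 (σ * L - M * ((n+1) * (2*s) - n * (2 * (0:ℝ) ^ (1 - 2*s) * 0)))) := by
      refine (hL.const_mul σ).sub ?_
      have : Continuous (fun y : ℝ => M * ((n+1) * (2*s) - n * (2 * y ^ (1 - 2*s) * y))) := by
        have : Continuous (fun y : ℝ => y ^ (1 - 2*s)) :=
          Real.continuous_rpow_const (by linarith [hs.2])
        fun_prop
      exact (this.tendsto 0).mono_left nhdsWithin_le_nhds
    have hev := hlim.eventually (lt_mem_nhds (a := 0) (by simp; linarith))
    have hev2 : ∀ᶠ y in 𝓝[>] (0:ℝ), y^2 < 1 - ‖x‖^2 := by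
      have : Tendsto (fun y : ℝ => y^2) (𝓝[>] 0) (𝓝 0) := by
        have : Continuous (fun y : ℝ => y^2) := by fun_prop
        simpa using (this.tendsto 0).mono_left nhdsWithin_le_nhds
      exact this.eventually (gt_mem_nhds hx2)
    obtain ⟨ε, hε, hsub⟩ := (mem_nhdsGT_iff_exists_Ioc_subset).1 (hev.and hev2)
    have hε0 : 0 < ε := hε
    have hmono : StrictMonoOn (fun y : ℝ => σ * u t (x, y) - M * psi s x₀ t (x, y)) (Icc 0 ε) := by
      refine strictMonoOn_of_deriv_pos (convex_Icc _ _) ?_ ?_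
      · refine ContinuousOn.sub (ContinuousOn.mul continuousOn_const ?_) ?_
        · refine hc.comp (f := fun y : ℝ => (t, (x, y))) (by fun_prop) ?_
          intro y hy
          refine ⟨⟨ht.1.le, ht.2⟩, ?_⟩
          rcases hy.1.eq_or_lt with h | h
          · subst h; exact hxm 0 le_rfl (by simpa using hx2)
          · exact hxm y hy.1 (hsub ⟨h, hy.2⟩).2
        · have : Continuous (fun y : ℝ => M * psi s x₀ t (x, y)) :=
            continuous_const.mul ((psi_cont hs x₀).comp (f := fun y : ℝ => (t, (x, y))) (by fun_prop))
          exact this.continuousOn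
      · intro y hy
        rw [interior_Icc] at hy
        obtain ⟨k1, k2⟩ := hsub ⟨hy.1, hy.2.le⟩
        have hy0 := hy.1
        have hpm : (x, y) ∈ halfBall n 1 := ⟨by simp only; linarith, hy.1⟩
        have hdu : DifferentiableAt ℝ (u t) (x, y) :=
          ((hh t ⟨ht.1.le, ht.2⟩).1.contDiffAt
            ((isOpen_halfBall n 1).mem_nhds hpm)).differentiableAt (by norm_num)
        have e1 : HasDerivAt (fun y : ℝ => u t (x, y)) (fderiv ℝ (u t) (x, y) (0, 1)) y :=
          hdu.hasFDerivAt.comp_hasDerivAt y ((hasDerivAt_const y x).prodMk (hasDerivAt_id y))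
        have e2 : HasDerivAt (fun y : ℝ => psi s x₀ t (x, y))
            ((n+1) * (2*s * y^(2*s-1)) - n * (2 * y)) y := by
          unfold psi
          have := (((((hasDerivAt_id y).rpow_const (p := 2*s)
            (Or.inl hy0.ne')).const_mul ((n:ℝ)+1)).const_add (‖x - x₀‖ ^ 2)).sub
            (((hasDerivAt_id y).pow 2).const_mul (n:ℝ))).add_const (((n:ℝ) + 2) * (t + 1))
          exact this.congr_deriv (by simp)
        have e3 : HasDerivAt (fun y : ℝ => σ * u t (x, y) - M * psi s x₀ t (x, y)) _ y :=
          (e1.const_mul σ).sub (e2.const_mul M)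
        rw [e3.deriv]
        have hq : y ^ (1 - 2*s) * y ^ (2*s-1) = 1 := by
          rw [← Real.rpow_add hy0]; simp
        have hpos : 0 < y ^ (1 - 2*s) := Real.rpow_pos_of_pos hy0 _
        refine pos_of_mul_pos_right (a := y ^ (1 - 2*s)) ?_ hpos.le
        have : y ^ (1 - 2*s) * (σ * fderiv ℝ (u t) (x, y) (0, 1) -
            M * ((n+1) * (2*s * y^(2*s-1)) - n * (2 * y))) =
            σ * (y ^ (1 - 2*s) * fderiv ℝ (u t) (x, y) (0, 1)) -
            M * ((n+1) * (2*s) * (y ^ (1 - 2*s) * y ^ (2*s-1)) - n * (2 * y ^ (1 - 2*s) * y)) := by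
          ring
        rw [this, hq, mul_one]
        exact k1
    have h1 := hmono (left_mem_Icc.2 hε0.le) (right_mem_Icc.2 hε0.le) hε0
    have h2 := hmax t ⟨ht.1.le, ht.2⟩ (x, ε) (hxm ε hε0.le (hsub ⟨hε0, le_rfl⟩).2)
    simp only at h1
    linarith
  have hn0 : (0:ℝ) ≤ n := Nat.cast_nonneg n
  have : (n + 2 : ℝ) ≤ (n+1) * (2*s) := le_of_mul_le_mul_left (hT.trans hN) hM
  nlinarith [hs.2]

lemma max_principle {n : ℕ} (hn : 1 ≤ n) {s : ℝ} (hs : s ∈ Ioo (0:ℝ) (1/2))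
    {u : ℝ → En n × ℝ → ℝ} {x₀ : En n} {σ M m : ℝ} (hM : 0 < M)
    (hu : IsFracHeatSolution (1 - 2*s) u)
    (hbd : ∀ (t : ℝ) (p : En n × ℝ),
        ((t = -1 ∧ p ∈ closedHalfBall n 1) ∨ (t ∈ Icc (-1 : ℝ) 0 ∧ p ∈ closedSpherePlus n)) →
        σ * u t p - M * psi s x₀ t p ≤ m) :
    ∀ t ∈ Icc (-1 : ℝ) 0, ∀ p ∈ closedHalfBall n 1, σ * u t p - M * psi s x₀ t p ≤ m := by
  have hK : IsCompact (Icc (-1 : ℝ) 0 ×ˢ closedHalfBall n 1) :=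
    isCompact_Icc.prod (closedHalfBall_compact n)
  intro t ht p hp
  obtain ⟨⟨t', p'⟩, ⟨ht', hp'⟩, hm⟩ := hK.exists_isMaxOn (f := fun q : ℝ × (En n × ℝ) =>
    σ * u q.1 q.2 - M * psi s x₀ q.1 q.2) ⟨(t, p), ht, hp⟩
    ((continuousOn_const.mul hu.1).sub (continuous_const.mul (psi_cont hs x₀)).continuousOn)
  simp only at ht' hp'
  have hmax : ∀ τ ∈ Icc (-1:ℝ) 0, ∀ q ∈ closedHalfBall n 1,
      σ * u τ q - M * psi s x₀ τ q ≤ σ * u t' p' - M * psi s x₀ t' p' :=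
    fun τ hτ q hq => hm (show (τ, q) ∈ _ from ⟨hτ, hq⟩)
  refine (hmax t ht p hp).trans ?_
  by_cases h1 : t' = -1
  · exact hbd t' p' (Or.inl ⟨h1, hp'⟩)
  have h1' : t' ∈ Ioc (-1:ℝ) 0 := ⟨lt_of_le_of_ne ht'.1 (Ne.symm h1), ht'.2⟩
  by_cases h2 : ‖p'.1‖^2 + p'.2^2 = 1
  · exact hbd t' p' (Or.inr ⟨ht', h2, hp'.2⟩)
  have h2' : ‖p'.1‖^2 + p'.2^2 < 1^2 := lt_of_le_of_ne hp'.1 (by simpa using h2)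
  exfalso
  rcases hp'.2.eq_or_lt with h3 | h3
  · obtain ⟨x, y⟩ := p'
    simp only at h3 h2'
    subst h3
    refine no_bottom_max hs hM hu (x := x) ?_ h1' hmax
    show ‖x‖ < 1
    nlinarith [norm_nonneg x]
  · have hpi : p' ∈ halfBall n 1 := ⟨h2', h3⟩
    refine no_interior_max (x₀ := x₀) (σ := σ) (t := t') hn hs hM (hu.2.1 t' ht') hpi ?_
    filter_upwards [(isOpen_halfBall n 1).mem_nhds hpi] with q hq
    exact hmax t' ht' q ⟨hq.1.le, hq.2.le⟩

/-- **Lemma 4.5 (continuity at the initial time).** If a solution of the localized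
fractional heat equation separates from its value at `(-1, x₀, 0)`, `x₀ ∈ B_1^0`, at most
like `C₀ (|x-x₀|² + y^{1-a} + (t+1))^α` on the parabolic boundary, then it separates at
most like `C C₀ (|x-x₀|² + y^{1-a} + (t+1))^{sα/2}` everywhere (here `1-a = 2s`). -/
theorem fhe_regularity_bottom_boundary (n : ℕ) (hn : 1 ≤ n) (s : ℝ)
    (hs : s ∈ Ioo (0 : ℝ) (1/2)) (α : ℝ) (hα : α ∈ Ioc (0 : ℝ) 1) :
    ∃ C > 0, ∀ (u : ℝ → En n × ℝ → ℝ) (x₀ : En n) (C₀ : ℝ),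
      IsFracHeatSolution (1 - 2*s) u →
      x₀ ∈ flatBall n 1 → 0 ≤ C₀ →
      (∀ (t : ℝ) (p : En n × ℝ),
        ((t = -1 ∧ p ∈ closedHalfBall n 1) ∨ (t ∈ Icc (-1 : ℝ) 0 ∧ p ∈ closedSpherePlus n)) →
        |u t p - u (-1) (x₀, 0)| ≤ C₀ * (‖p.1 - x₀‖^2 + p.2 ^ (2*s) + (t + 1)) ^ α) →
      ∀ t ∈ Icc (-1 : ℝ) 0, ∀ p ∈ closedHalfBall n 1,
        |u t p - u (-1) (x₀, 0)| ≤
          C * C₀ * (‖p.1 - x₀‖^2 + p.2 ^ (2*s) + (t + 1)) ^ (s * α / 2) := by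
  obtain ⟨hα0, hα1⟩ := hα
  have hs0 := hs.1
  have hs1 := hs.2
  have hn0 : (0:ℝ) ≤ n := Nat.cast_nonneg n
  refine ⟨(n + 3) * 6 ^ (α - s * α / 2), by positivity, ?_⟩
  intro u x₀ C₀ hu hx₀ hC₀ hbd t ht p hp
  set U := u (-1) (x₀, 0) with hU
  have hx₀1 : ‖x₀‖ < 1 := hx₀
  -- comparison between rho and psi
  have hcmp : ∀ t ∈ Icc (-1:ℝ) 0, ∀ p ∈ closedHalfBall n 1,
      0 ≤ ‖p.1 - x₀‖^2 + p.2 ^ (2*s) + (t + 1) ∧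
      ‖p.1 - x₀‖^2 + p.2 ^ (2*s) + (t + 1) ≤ psi s x₀ t p ∧
      psi s x₀ t p ≤ (n+2) * (‖p.1 - x₀‖^2 + p.2 ^ (2*s) + (t + 1)) ∧
      ‖p.1 - x₀‖^2 + p.2 ^ (2*s) + (t + 1) ≤ 6 := by
    intro t ht p hp
    obtain ⟨x, y⟩ := p
    obtain ⟨h1, h2⟩ := hp
    simp only at h1 h2
    have hy1 : y ≤ 1 := by nlinarith [sq_nonneg ‖x‖]
    have hx1 : ‖x‖ ≤ 1 := by nlinarith [norm_nonneg x, sq_nonneg y]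
    have hY0 : 0 ≤ y ^ (2*s) := Real.rpow_nonneg h2 _
    have hY1 : y ^ (2*s) ≤ 1 := Real.rpow_le_one h2 hy1 (by linarith)
    have hY2 : y ^ 2 ≤ y ^ (2*s) := by
      rcases h2.eq_or_lt with h | h
      · subst h; simpa using hY0
      · rw [← Real.rpow_two]
        exact Real.rpow_le_rpow_of_exponent_ge h hy1 (by linarith)
    have hX : ‖x - x₀‖ ≤ 2 := (norm_sub_le _ _).trans (by linarith)
    have hX2 : ‖x - x₀‖^2 ≤ 4 := by nlinarith [norm_nonneg (x - x₀)]
    have hX3 : 0 ≤ ‖x - x₀‖^2 := sq_nonneg _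
    obtain ⟨ht1, ht2⟩ := ht
    have q1 := mul_le_mul_of_nonneg_left hY2 hn0
    have q2 : 0 ≤ n * (t+1) := mul_nonneg hn0 (by linarith)
    have q3 := mul_nonneg hn0 hX3
    have q4 := mul_nonneg hn0 (sq_nonneg y)
    unfold psi
    simp only
    refine ⟨by linarith, by nlinarith, by nlinarith, by linarith⟩
  obtain ⟨hρ0, -, hρ2, hρ6⟩ := hcmp t ht p hp
  have key : |u t p - U| ≤ C₀ * ((n + 3) * (‖p.1 - x₀‖^2 + p.2 ^ (2*s) + (t + 1)) ^ α) := by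
    set ρ := ‖p.1 - x₀‖^2 + p.2 ^ (2*s) + (t + 1) with hρ
    rcases hρ0.eq_or_lt with h0 | h0
    · have ht1 : t = -1 := by
        have := Real.rpow_nonneg hp.2 (2*s)
        have := sq_nonneg ‖p.1 - x₀‖
        linarith [ht.1]
      have := hbd t p (Or.inl ⟨ht1, hp⟩)
      rw [← hρ, ← h0, Real.zero_rpow hα0.ne'] at this
      rw [← h0, Real.zero_rpow hα0.ne']
      simpa using this
    have hstep : ∀ K > C₀, |u t p - U| ≤ K * ((n + 3) * ρ ^ α) := by
      intro K hK
      have hK0 : 0 < K := lt_of_le_of_lt hC₀ hK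
      have hMpos : 0 < K * ρ ^ (α - 1) := mul_pos hK0 (Real.rpow_pos_of_pos h0 _)
      have hb2 : ∀ (t : ℝ) (p : En n × ℝ),
        ((t = -1 ∧ p ∈ closedHalfBall n 1) ∨ (t ∈ Icc (-1 : ℝ) 0 ∧ p ∈ closedSpherePlus n)) →
        |u t p - U| ≤ K * ρ ^ α + K * ρ ^ (α - 1) * psi s x₀ t p := by
        intro t' p' h
        have hm : t' ∈ Icc (-1:ℝ) 0 ∧ p' ∈ closedHalfBall n 1 := by
          rcases h with ⟨h, h'⟩ | ⟨h, h', h''⟩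
          · exact ⟨⟨h.ge, by linarith⟩, h'⟩
          · exact ⟨h, by simpa using h'.le, h''⟩
        obtain ⟨r0, r1, -, -⟩ := hcmp t' hm.1 p' hm.2
        refine (hbd t' p' h).trans ?_
        set R := ‖p'.1 - x₀‖^2 + p'.2 ^ (2*s) + (t' + 1)
        have hR : R ^ α ≤ ρ ^ α + ρ ^ (α - 1) * R := by
          rcases le_or_gt R ρ with hle | hlt
          · have a1 := Real.rpow_le_rpow r0 hle hα0.le
            have a2 := mul_nonneg (Real.rpow_nonneg h0.le (α - 1)) r0
            linarith
          · have hR0 : 0 < R := h0.trans hlt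
            have a1 : R ^ α = R ^ (α - 1) * R := by
              rw [← Real.rpow_add_one hR0.ne']; ring_nf
            have a2 : R ^ (α - 1) ≤ ρ ^ (α - 1) :=
              Real.rpow_le_rpow_of_nonpos h0 hlt.le (by linarith)
            have a3 := mul_le_mul_of_nonneg_right a2 r0
            have a4 := Real.rpow_nonneg h0.le α
            linarith
        calc C₀ * R ^ α ≤ K * R ^ α := by
              exact mul_le_mul_of_nonneg_right hK.le (Real.rpow_nonneg r0 _)
          _ ≤ K * (ρ ^ α + ρ ^ (α - 1) * R) := mul_le_mul_of_nonneg_left hR hK0.le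
          _ = K * ρ ^ α + K * ρ ^ (α - 1) * R := by ring
          _ ≤ _ := by
            have := mul_le_mul_of_nonneg_left r1 hMpos.le
            linarith
      have hup := max_principle (x₀ := x₀) (σ := 1) (m := U + K * ρ ^ α) hn hs hMpos hu
        (fun t' p' h => by have := (abs_le.1 (hb2 t' p' h)).2; linarith) t ht p hp
      have hlo := max_principle (x₀ := x₀) (σ := -1) (m := -U + K * ρ ^ α) hn hs hMpos hu
        (fun t' p' h => by have := (abs_le.1 (hb2 t' p' h)).1; linarith) t ht p hp
      have e1 : ρ ^ (α - 1) * ρ = ρ ^ α := by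
        rw [← Real.rpow_add_one h0.ne']; ring_nf
      have e2 : K * ρ ^ (α - 1) * psi s x₀ t p ≤ K * ((n + 2) * ρ ^ α) := by
        calc _ ≤ K * ρ ^ (α - 1) * ((n+2) * ρ) := mul_le_mul_of_nonneg_left hρ2 hMpos.le
          _ = K * ((n + 2) * (ρ ^ (α - 1) * ρ)) := by ring
          _ = _ := by rw [e1]
      rw [abs_le]
      constructor <;> nlinarith
    have hT : Tendsto (fun K : ℝ => K * ((n + 3) * ρ ^ α)) (𝓝[>] C₀) (𝓝 (C₀ * ((n + 3) * ρ ^ α))) := by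
      have : Continuous (fun K : ℝ => K * ((n + 3) * ρ ^ α)) := by fun_prop
      exact (this.tendsto C₀).mono_left nhdsWithin_le_nhds
    exact ge_of_tendsto hT (by filter_upwards [self_mem_nhdsWithin] with K hK using hstep K hK)
  refine key.trans ?_
  set ρ := ‖p.1 - x₀‖^2 + p.2 ^ (2*s) + (t + 1) with hρ
  have hexp : 0 ≤ α - s * α / 2 := by nlinarith
  have e1 : ρ ^ α = ρ ^ (α - s * α / 2) * ρ ^ (s * α / 2) := by
    rw [← Real.rpow_add_of_nonneg hρ0 hexp (by positivity)]; ring_nf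
  have e2 : ρ ^ α ≤ 6 ^ (α - s * α / 2) * ρ ^ (s * α / 2) := by
    rw [e1]
    exact mul_le_mul_of_nonneg_right (Real.rpow_le_rpow hρ0 hρ6 hexp) (Real.rpow_nonneg hρ0 _)
  calc C₀ * ((n + 3) * ρ ^ α) ≤ C₀ * ((n + 3) * (6 ^ (α - s * α / 2) * ρ ^ (s * α / 2))) := by
        gcongr
    _ = _ := by ring

end
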